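/- Let K^{BTBM}_t(x) be the d-dimensional BTBM density for d ∈ {1,2,3}, with the convention K^{BTBM}_t = 0 for t < 0. Then there is a constant C depending only on d such that for all 0 < r < t, ∫₀^t ∫_{ℝ^d} [K^{BTBM}_{t−s}(x) − K^{BTBM}_{r−s}(x)]² dx ds ≤ C (t−r)^{(4−d)/4}. -/

import Mathlib

/-!
Since `K_t(x) = 𝔼 p_{|W_t|}(x)` with `p` the heat kernel and `W` a Brownian motion, Fubini and
Chapman–Kolmogorov give `⟨K_a, K_b⟩ = 𝔼 p_{√a|Z| + √b|Z'|}(0)` in `L²(ℝᵈ)`, with `Z`, `Z'`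
independent standard Gaussians. As `s ↦ p_s(0)` is decreasing, `⟨K_a, K_b⟩ ≥ ‖K_a‖²` for `b ≤ a`,
so that `‖K_a - K_b‖² ≤ ‖K_b‖² - ‖K_a‖²`. By scaling `‖K_a‖² = a^(-d/4) ‖K_1‖²`, which is finite
exactly when `d < 4`, and integrating the difference of powers in time gives the bound.
-/

open Real MeasureTheory Set

noncomputable def heatK (d : ℕ) (s : ℝ) (x : EuclideanSpace ℝ (Fin d)) : ℝ :=
  (2 * π * s) ^ (-(d : ℝ)/2) * Real.exp (-‖x‖^2 / (2*s))

/-- BTBM density, with the convention that it vanishes for nonpositive times. -/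
noncomputable def btbmK (d : ℕ) (t : ℝ) (x : EuclideanSpace ℝ (Fin d)) : ℝ :=
  if 0 < t then
    2 * ∫ s in Ioi (0:ℝ),
        heatK d s x * ((2 * π * t) ^ (-(1:ℝ)/2) * Real.exp (-s^2 / (2*t)))
  else 0

open ProbabilityTheory

open scoped NNReal

section HeatKernel

variable {d : ℕ} {s u : ℝ}

@[fun_prop]
lemma measurable_heatK {α : Type*} [MeasurableSpace α] {f : α → ℝ}
    {g : α → EuclideanSpace ℝ (Fin d)} (hf : Measurable f) (hg : Measurable g) :
    Measurable fun a ↦ heatK d (f a) (g a) := by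
  unfold heatK
  fun_prop

lemma heatK_nonneg (hs : 0 ≤ s) (x : EuclideanSpace ℝ (Fin d)) : 0 ≤ heatK d s x := by
  unfold heatK
  positivity

lemma heatK_apply_zero : heatK d s 0 = (2 * π * s) ^ (-(d : ℝ) / 2) := by
  simp [heatK]

lemma heatK_apply_zero_pos (hs : 0 < s) : 0 < heatK d s 0 := by
  rw [heatK_apply_zero]
  positivity

lemma heatK_apply_zero_anti (hs : 0 < s) (hsu : s ≤ u) : heatK d u 0 ≤ heatK d s 0 := by
  simp only [heatK_apply_zero]
  refine rpow_le_rpow_of_nonpos (by positivity) (by gcongr) ?_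
  rw [neg_div]
  exact neg_nonpos.mpr (by positivity)

lemma heatK_const_mul_apply_zero {c : ℝ} (hc : 0 ≤ c) (hs : 0 ≤ s) :
    heatK d (c * s) 0 = c ^ (-(d : ℝ) / 2) * heatK d s 0 := by
  simp only [heatK_apply_zero]
  rw [← mul_rpow hc (by positivity)]
  ring_nf

/-- By `2 √(s u) ≤ s + u`, the singularity at `s + u = 0` splits into one in each variable. -/
lemma heatK_add_apply_zero_le (hs : 0 < s) (hu : 0 < u) :
    heatK d (s + u) 0 ≤ (4 * π) ^ (-(d : ℝ) / 2) * (s ^ (-(d : ℝ) / 4) * u ^ (-(d : ℝ) / 4)) := by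
  have am_gm : 2 * √(s * u) ≤ s + u := by
    rw [sqrt_mul hs.le]
    nlinarith [sq_nonneg (√s - √u), sq_sqrt hs.le, sq_sqrt hu.le]
  calc heatK d (s + u) 0 ≤ heatK d (2 * √(s * u)) 0 :=
        heatK_apply_zero_anti (by positivity) am_gm
    _ = (4 * π * √(s * u)) ^ (-(d : ℝ) / 2) := by
        rw [heatK_apply_zero]
        ring_nf
    _ = (4 * π) ^ (-(d : ℝ) / 2) * (s ^ (-(d : ℝ) / 4) * u ^ (-(d : ℝ) / 4)) := by
        rw [mul_rpow (by positivity) (by positivity), sqrt_eq_rpow, ← rpow_mul (by positivity),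
          ← mul_rpow hs.le hu.le]
        ring_nf

lemma integral_heatK_mul_heatK (hs : 0 < s) (hu : 0 < u) :
    ∫ x, heatK d s x * heatK d u x = heatK d (s + u) 0 := by
  have heatK_mul (x : EuclideanSpace ℝ (Fin d)) : heatK d s x * heatK d u x =
      ((2 * π * s) * (2 * π * u)) ^ (-((d : ℝ) / 2)) *
        exp (-((s + u) / (2 * s * u)) * ‖x‖ ^ 2) := by
    have exponent : -((s + u) / (2 * s * u)) * ‖x‖ ^ 2 =
        -‖x‖ ^ 2 / (2 * s) + -‖x‖ ^ 2 / (2 * u) := by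
      field_simp
      ring
    rw [exponent, exp_add, mul_rpow (by positivity) (by positivity), ← neg_div]
    unfold heatK
    ring
  have gaussian := GaussianFourier.integral_rexp_neg_mul_sq_norm
    (V := EuclideanSpace ℝ (Fin d)) (show 0 < (s + u) / (2 * s * u) by positivity)
  have base : π / ((s + u) / (2 * s * u)) =
      (2 * π * (s + u))⁻¹ * ((2 * π * s) * (2 * π * u)) := by
    field_simp
  have product_pos : 0 < (2 * π * s) * (2 * π * u) := by positivity
  simp only [heatK_mul]
  rw [integral_const_mul, gaussian, finrank_euclideanSpace_fin, base, heatK_apply_zero, neg_div,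
    mul_rpow (by positivity) product_pos.le, inv_rpow (by positivity), ← rpow_neg (by positivity),
    mul_left_comm, ← rpow_add product_pos, neg_add_cancel, rpow_zero, mul_one]

lemma integrable_heatK_mul_heatK (hs : 0 < s) (hu : 0 < u) :
    Integrable fun x ↦ heatK d s x * heatK d u x := by
  refine .of_integral_ne_zero ?_
  rw [integral_heatK_mul_heatK hs hu]
  exact (heatK_apply_zero_pos (by positivity)).ne'

end HeatKernel

section Subordination

variable {Ω : Type*} [MeasurableSpace Ω]

/-- The density of a `d`-dimensional Brownian motion run for the independent random time `τ`,
a function on the measure space `(Ω, μ)`. -/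
noncomputable def subordinatedHeatK (d : ℕ) (μ : Measure Ω) (τ : Ω → ℝ)
    (x : EuclideanSpace ℝ (Fin d)) : ℝ :=
  ∫ ω, heatK d (τ ω) x ∂μ

/-- The `L²` inner product of the heat kernels subordinated to `τ` and `σ`, written through
Chapman–Kolmogorov as an average of the heat kernel at the origin over the sum of independent
copies of the two random times. -/
noncomputable def clockOverlap (d : ℕ) (μ : Measure Ω) (τ σ : Ω → ℝ) : ℝ :=
  ∫ p, heatK d (τ p.1 + σ p.2) 0 ∂μ.prod μ

/-- Finiteness of `clockOverlap`. -/
def HasFiniteOverlap (d : ℕ) (μ : Measure Ω) (τ σ : Ω → ℝ) : Prop :=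
  Integrable (fun p : Ω × Ω ↦ heatK d (τ p.1 + σ p.2) 0) (μ.prod μ)

variable {d : ℕ} {μ : Measure Ω} {τ σ τ' σ' : Ω → ℝ}

lemma ae_prod_pos_and_pos (hτ : ∀ᵐ ω ∂μ, 0 < τ ω) (hσ : ∀ᵐ ω ∂μ, 0 < σ ω) :
    ∀ᵐ p ∂μ.prod μ, 0 < τ p.1 ∧ 0 < σ p.2 :=
  (Measure.quasiMeasurePreserving_fst.ae hτ).and (Measure.quasiMeasurePreserving_snd.ae hσ)

lemma heatK_clock_le_ae (hτ : ∀ᵐ ω ∂μ, 0 < τ ω) (hσ : ∀ᵐ ω ∂μ, 0 < σ ω)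
    (hττ' : τ ≤ τ') (hσσ' : σ ≤ σ') :
    ∀ᵐ p ∂μ.prod μ, heatK d (τ' p.1 + σ' p.2) 0 ≤ heatK d (τ p.1 + σ p.2) 0 := by
  filter_upwards [ae_prod_pos_and_pos hτ hσ] with p ⟨hτp, hσp⟩
  exact heatK_apply_zero_anti (by positivity) (add_le_add (hττ' p.1) (hσσ' p.2))

lemma HasFiniteOverlap.anti (hτ'm : Measurable τ') (hσ'm : Measurable σ')
    (hτ : ∀ᵐ ω ∂μ, 0 < τ ω) (hσ : ∀ᵐ ω ∂μ, 0 < σ ω) (hττ' : τ ≤ τ') (hσσ' : σ ≤ σ')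
    (h : HasFiniteOverlap d μ τ σ) : HasFiniteOverlap d μ τ' σ' := by
  refine Integrable.mono' h (Measurable.aestronglyMeasurable (by fun_prop)) ?_
  filter_upwards [heatK_clock_le_ae hτ hσ hττ' hσσ', ae_prod_pos_and_pos hτ hσ]
    with p hle ⟨hτp, hσp⟩
  rwa [norm_of_nonneg (heatK_nonneg (add_nonneg (hτp.le.trans (hττ' p.1))
    (hσp.le.trans (hσσ' p.2))) 0)]

lemma clockOverlap_anti (hτ'm : Measurable τ') (hσ'm : Measurable σ')
    (hτ : ∀ᵐ ω ∂μ, 0 < τ ω) (hσ : ∀ᵐ ω ∂μ, 0 < σ ω) (hττ' : τ ≤ τ') (hσσ' : σ ≤ σ')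
    (h : HasFiniteOverlap d μ τ σ) : clockOverlap d μ τ' σ' ≤ clockOverlap d μ τ σ :=
  integral_mono_ae (h.anti hτ'm hσ'm hτ hσ hττ' hσσ') h (heatK_clock_le_ae hτ hσ hττ' hσσ')

lemma heatK_const_mul_clock_ae {c : ℝ} (hc : 0 ≤ c) (hτ : ∀ᵐ ω ∂μ, 0 < τ ω) :
    ∀ᵐ p ∂μ.prod μ, heatK d (c * τ p.1 + c * τ p.2) 0 =
      c ^ (-(d : ℝ) / 2) * heatK d (τ p.1 + τ p.2) 0 := by
  filter_upwards [ae_prod_pos_and_pos hτ hτ] with p ⟨hp₁, hp₂⟩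
  rw [← mul_add, heatK_const_mul_apply_zero hc (by positivity)]

lemma HasFiniteOverlap.const_mul {c : ℝ} (hc : 0 ≤ c) (hτ : ∀ᵐ ω ∂μ, 0 < τ ω)
    (h : HasFiniteOverlap d μ τ τ) :
    HasFiniteOverlap d μ (fun ω ↦ c * τ ω) (fun ω ↦ c * τ ω) :=
  (Integrable.const_mul h _).congr <| (heatK_const_mul_clock_ae hc hτ).mono fun _ hp ↦ hp.symm

lemma clockOverlap_const_mul {c : ℝ} (hc : 0 ≤ c) (hτ : ∀ᵐ ω ∂μ, 0 < τ ω) :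
    clockOverlap d μ (fun ω ↦ c * τ ω) (fun ω ↦ c * τ ω) =
      c ^ (-(d : ℝ) / 2) * clockOverlap d μ τ τ := by
  unfold clockOverlap
  rw [integral_congr_ae (heatK_const_mul_clock_ae hc hτ), integral_const_mul]

variable [SFinite μ]

lemma integrable_heatK_clock_mul_heatK_clock (hτm : Measurable τ) (hσm : Measurable σ)
    (hτ : ∀ᵐ ω ∂μ, 0 < τ ω) (hσ : ∀ᵐ ω ∂μ, 0 < σ ω) (h : HasFiniteOverlap d μ τ σ) :
    Integrable (fun z : EuclideanSpace ℝ (Fin d) × (Ω × Ω) ↦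
      heatK d (τ z.2.1) z.1 * heatK d (σ z.2.2) z.1) (volume.prod (μ.prod μ)) := by
  have pos := ae_prod_pos_and_pos hτ hσ
  refine (integrable_prod_iff' (Measurable.aestronglyMeasurable (by fun_prop))).2
    ⟨pos.mono fun p hp ↦ integrable_heatK_mul_heatK hp.1 hp.2, h.congr ?_⟩
  filter_upwards [pos] with p ⟨hτp, hσp⟩
  rw [← integral_heatK_mul_heatK hτp hσp]
  exact integral_congr_ae <| .of_forall fun x ↦
    (norm_of_nonneg (mul_nonneg (heatK_nonneg hτp.le x) (heatK_nonneg hσp.le x))).symm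

lemma subordinatedHeatK_mul (x : EuclideanSpace ℝ (Fin d)) :
    subordinatedHeatK d μ τ x * subordinatedHeatK d μ σ x =
      ∫ p, heatK d (τ p.1) x * heatK d (σ p.2) x ∂μ.prod μ :=
  (integral_prod_mul _ _).symm

lemma integrable_subordinatedHeatK_mul (hτm : Measurable τ) (hσm : Measurable σ)
    (hτ : ∀ᵐ ω ∂μ, 0 < τ ω) (hσ : ∀ᵐ ω ∂μ, 0 < σ ω) (h : HasFiniteOverlap d μ τ σ) :
    Integrable fun x ↦ subordinatedHeatK d μ τ x * subordinatedHeatK d μ σ x := by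
  simp only [subordinatedHeatK_mul]
  exact (integrable_heatK_clock_mul_heatK_clock hτm hσm hτ hσ h).integral_prod_left

lemma integral_subordinatedHeatK_mul (hτm : Measurable τ) (hσm : Measurable σ)
    (hτ : ∀ᵐ ω ∂μ, 0 < τ ω) (hσ : ∀ᵐ ω ∂μ, 0 < σ ω) (h : HasFiniteOverlap d μ τ σ) :
    ∫ x, subordinatedHeatK d μ τ x * subordinatedHeatK d μ σ x = clockOverlap d μ τ σ := by
  simp only [subordinatedHeatK_mul]
  rw [integral_integral_swap (integrable_heatK_clock_mul_heatK_clock hτm hσm hτ hσ h)]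
  exact integral_congr_ae <| (ae_prod_pos_and_pos hτ hσ).mono fun p hp ↦
    integral_heatK_mul_heatK hp.1 hp.2

theorem integral_sq_subordinatedHeatK_sub_le (hτm : Measurable τ) (hσm : Measurable σ)
    (hσ : ∀ᵐ ω ∂μ, 0 < σ ω) (hστ : σ ≤ τ) (h : HasFiniteOverlap d μ σ σ) :
    ∫ x, (subordinatedHeatK d μ τ x - subordinatedHeatK d μ σ x) ^ 2 ≤
      clockOverlap d μ σ σ - clockOverlap d μ τ τ := by
  have hτ : ∀ᵐ ω ∂μ, 0 < τ ω := hσ.mono fun ω hω ↦ hω.trans_le (hστ ω)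
  have finite_τσ : HasFiniteOverlap d μ τ σ := h.anti hτm hσm hσ hσ hστ le_rfl
  have finite_ττ : HasFiniteOverlap d μ τ τ := h.anti hτm hτm hσ hσ hστ hστ
  have cross : clockOverlap d μ τ τ ≤ clockOverlap d μ τ σ :=
    clockOverlap_anti hτm hτm hτ hσ le_rfl hστ finite_τσ
  have int_ττ := integrable_subordinatedHeatK_mul hτm hτm hτ hτ finite_ττ
  have int_τσ := (integrable_subordinatedHeatK_mul hτm hσm hτ hσ finite_τσ).const_mul 2
  have int_diff : Integrable fun x ↦ subordinatedHeatK d μ τ x * subordinatedHeatK d μ τ x -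
      2 * (subordinatedHeatK d μ τ x * subordinatedHeatK d μ σ x) := int_ττ.sub int_τσ
  have int_σσ := integrable_subordinatedHeatK_mul hσm hσm hσ hσ h
  calc ∫ x, (subordinatedHeatK d μ τ x - subordinatedHeatK d μ σ x) ^ 2
      = ∫ x, (subordinatedHeatK d μ τ x * subordinatedHeatK d μ τ x
          - 2 * (subordinatedHeatK d μ τ x * subordinatedHeatK d μ σ x)
          + subordinatedHeatK d μ σ x * subordinatedHeatK d μ σ x) := by
        congr with x
        ring
    _ = clockOverlap d μ τ τ - 2 * clockOverlap d μ τ σ + clockOverlap d μ σ σ := by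
        rw [integral_add int_diff int_σσ, integral_sub int_ττ int_τσ,
          integral_const_mul, integral_subordinatedHeatK_mul hτm hτm hτ hτ finite_ττ,
          integral_subordinatedHeatK_mul hτm hσm hτ hσ finite_τσ,
          integral_subordinatedHeatK_mul hσm hσm hσ hσ h]
    _ ≤ clockOverlap d μ σ σ - clockOverlap d μ τ τ := by linarith

end Subordination

section GaussianAbs

variable {v : ℝ≥0}

lemma integral_comp_abs_gaussianReal (hv : v ≠ 0) (f : ℝ → ℝ) :
    ∫ z, f |z| ∂gaussianReal 0 v = 2 * ∫ z in Ioi 0, gaussianPDFReal 0 v z * f z := by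
  rw [integral_gaussianReal_eq_integral_smul hv, ← integral_comp_abs]
  simp only [gaussianPDFReal_def, sub_zero, smul_eq_mul, sq_abs]

lemma integrable_abs_rpow_gaussianReal (hv : v ≠ 0) {p : ℝ} (hp : -1 < p) :
    Integrable (fun z ↦ |z| ^ p) (gaussianReal 0 v) := by
  have : 0 < (v : ℝ) := NNReal.coe_pos.2 (pos_iff_ne_zero.2 hv)
  have density (z : ℝ) : gaussianPDFReal 0 v z * z ^ p =
      (√(2 * π * v))⁻¹ * (z ^ p * exp (-(2 * (v : ℝ))⁻¹ * z ^ (2 : ℝ))) := by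
    rw [gaussianPDFReal, rpow_two, sub_zero, mul_assoc, mul_comm (z ^ p), neg_mul, neg_div,
      div_eq_inv_mul]
  refine .of_integral_ne_zero ?_
  rw [integral_comp_abs_gaussianReal hv (· ^ p)]
  simp only [density]
  rw [integral_const_mul, integral_rpow_mul_exp_neg_mul_rpow two_pos hp (by positivity)]
  have gamma_pos : 0 < Gamma ((p + 1) / 2) := Gamma_pos_of_pos (by linarith)
  positivity

lemma ae_abs_pos_gaussianReal (hv : v ≠ 0) (m : ℝ) : ∀ᵐ z ∂gaussianReal m v, 0 < |z| := by
  have := nullSingletonClass_gaussianReal (μ := m) hv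
  filter_upwards [Measure.ae_ne (gaussianReal m v) 0] with z hz
  exact abs_pos.2 hz

end GaussianAbs

section BTBM

variable {d : ℕ} {a b : ℝ}

/-- The random time `|W_t|` at which the outer Brownian motion is evaluated, realised on the
Gaussian space as `√t |z|` so that it is monotone in `t`. -/
noncomputable def btbmClock (t : ℝ) (z : ℝ) : ℝ := √t * |z|

lemma measurable_btbmClock (t : ℝ) : Measurable (btbmClock t) := by
  unfold btbmClock
  fun_prop

lemma btbmClock_mono (hab : a ≤ b) : btbmClock a ≤ btbmClock b := fun z ↦ by
  unfold btbmClock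
  gcongr

lemma btbmClock_pos_ae (ha : 0 < a) : ∀ᵐ z ∂gaussianReal 0 1, 0 < btbmClock a z :=
  (ae_abs_pos_gaussianReal one_ne_zero 0).mono fun _ hz ↦ mul_pos (sqrt_pos.2 ha) hz

lemma btbmK_eq_subordinatedHeatK (ha : 0 < a) :
    btbmK d a = subordinatedHeatK d (gaussianReal 0 1) (btbmClock a) := by
  have scaling : (gaussianReal 0 1).map (√a * ·) = gaussianReal 0 a.toNNReal := by
    rw [gaussianReal_map_const_mul, mul_zero, mul_one]
    congr
    simp [ha.le]
  ext x
  calc btbmK d a x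
      = 2 * ∫ s in Ioi 0, gaussianPDFReal 0 a.toNNReal s * heatK d s x := by
        rw [btbmK, if_pos ha]
        congr with s
        rw [gaussianPDFReal, coe_toNNReal a ha.le, sub_zero, sqrt_eq_rpow, neg_div,
          ← rpow_neg (by positivity), mul_comm]
    _ = ∫ y, heatK d |y| x ∂(gaussianReal 0 1).map (√a * ·) := by
        rw [scaling, integral_comp_abs_gaussianReal (toNNReal_pos.2 ha).ne' (heatK d · x)]
    _ = subordinatedHeatK d (gaussianReal 0 1) (btbmClock a) x := by
        rw [integral_map (by fun_prop) (Measurable.aestronglyMeasurable (by fun_prop))]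
        simp only [abs_mul, abs_of_nonneg (sqrt_nonneg a), subordinatedHeatK, btbmClock]

lemma hasFiniteOverlap_abs (hd : d < 4) :
    HasFiniteOverlap d (gaussianReal 0 1) (|·|) (|·|) := by
  have hd' : (d : ℝ) < 4 := mod_cast hd
  have integrable_abs : Integrable (fun z ↦ |z| ^ (-(d : ℝ) / 4)) (gaussianReal 0 1) :=
    integrable_abs_rpow_gaussianReal one_ne_zero (by linarith)
  have abs_pos_ae := ae_abs_pos_gaussianReal one_ne_zero 0
  refine Integrable.mono' ((integrable_abs.mul_prod integrable_abs).const_mul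
    ((4 * π) ^ (-(d : ℝ) / 2))) (Measurable.aestronglyMeasurable (by fun_prop)) ?_
  filter_upwards [ae_prod_pos_and_pos abs_pos_ae abs_pos_ae] with p ⟨hp₁, hp₂⟩
  rw [norm_of_nonneg (heatK_nonneg (by positivity) 0)]
  exact heatK_add_apply_zero_le hp₁ hp₂

/-- The squared `L²` norm of the BTBM density at time `1`. -/
noncomputable def btbmEnergy (d : ℕ) : ℝ := clockOverlap d (gaussianReal 0 1) (|·|) (|·|)

lemma btbmEnergy_nonneg (d : ℕ) : 0 ≤ btbmEnergy d :=
  integral_nonneg fun _ ↦ heatK_nonneg (by positivity) 0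

lemma clockOverlap_btbmClock (ha : 0 < a) :
    clockOverlap d (gaussianReal 0 1) (btbmClock a) (btbmClock a) =
      a ^ (-((d : ℝ) / 4)) * btbmEnergy d := by
  rw [show btbmClock a = fun z ↦ √a * |z| from rfl,
    clockOverlap_const_mul (sqrt_nonneg a) (ae_abs_pos_gaussianReal one_ne_zero 0),
    sqrt_eq_rpow, ← rpow_mul ha.le, btbmEnergy]
  ring_nf

lemma hasFiniteOverlap_btbmClock (hd : d < 4) (a : ℝ) :
    HasFiniteOverlap d (gaussianReal 0 1) (btbmClock a) (btbmClock a) :=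
  (hasFiniteOverlap_abs hd).const_mul (sqrt_nonneg a) (ae_abs_pos_gaussianReal one_ne_zero 0)

theorem integral_sq_btbmK (hd : d < 4) (ha : 0 < a) :
    ∫ x, btbmK d a x ^ 2 = a ^ (-((d : ℝ) / 4)) * btbmEnergy d := by
  simp only [btbmK_eq_subordinatedHeatK ha, sq]
  rw [integral_subordinatedHeatK_mul (measurable_btbmClock a) (measurable_btbmClock a)
    (btbmClock_pos_ae ha) (btbmClock_pos_ae ha) (hasFiniteOverlap_btbmClock hd a),
    clockOverlap_btbmClock ha]

theorem integral_sq_btbmK_sub_le (hd : d < 4) (hb : 0 < b) (hba : b ≤ a) :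
    ∫ x, (btbmK d a x - btbmK d b x) ^ 2 ≤
      (b ^ (-((d : ℝ) / 4)) - a ^ (-((d : ℝ) / 4))) * btbmEnergy d := by
  have ha : 0 < a := hb.trans_le hba
  rw [btbmK_eq_subordinatedHeatK ha, btbmK_eq_subordinatedHeatK hb, sub_mul,
    ← clockOverlap_btbmClock ha, ← clockOverlap_btbmClock hb]
  exact integral_sq_subordinatedHeatK_sub_le (measurable_btbmClock a) (measurable_btbmClock b)
    (btbmClock_pos_ae hb) (btbmClock_mono hba) (hasFiniteOverlap_btbmClock hd b)

end BTBM

section TimeIntegral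

variable {q r t : ℝ}

lemma intervalIntegrable_sub_rpow_neg (hq : q < 1) (a b c : ℝ) :
    IntervalIntegrable (fun s ↦ (c - s) ^ (-q)) volume a b := by
  simpa using (intervalIntegral.intervalIntegrable_rpow' (a := c - a) (b := c - b) (r := -q)
    (by linarith)).comp_sub_left c

lemma integrableOn_Ioo_sub_rpow_neg (hq : q < 1) (a b c : ℝ) :
    IntegrableOn (fun s ↦ (c - s) ^ (-q)) (Ioo a b) :=
  (intervalIntegrable_sub_rpow_neg hq a b c).1.mono_set Ioo_subset_Ioc_self

lemma setIntegral_Ioo_sub_rpow_neg (hq : q < 1) {a b : ℝ} (hab : a ≤ b) (c : ℝ) :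
    ∫ s in Ioo a b, (c - s) ^ (-q) = ((c - a) ^ (1 - q) - (c - b) ^ (1 - q)) / (1 - q) := by
  rw [← integral_Ioc_eq_integral_Ioo, ← intervalIntegral.integral_of_le hab,
    intervalIntegral.integral_comp_sub_left (· ^ (-q)), integral_rpow (.inl (by linarith)),
    neg_add_eq_sub]

/-- The increment from `r - s` to `t - s` of the power `u ↦ u ^ (-q)` extended by zero to `u ≤ 0`,
as a function of `s < t`, with the sign that makes it nonnegative when `0 ≤ q` and `r ≤ t`. -/
noncomputable def rpowIncrement (q r t : ℝ) : ℝ → ℝ :=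
  (Iio r).piecewise (fun s ↦ (r - s) ^ (-q) - (t - s) ^ (-q)) fun s ↦ (t - s) ^ (-q)

lemma integrableOn_rpowIncrement (hq : q < 1) (a b : ℝ) :
    IntegrableOn (rpowIncrement q r t) (Ioo a b) :=
  Integrable.piecewise measurableSet_Iio
    ((integrableOn_Ioo_sub_rpow_neg hq a b r).sub
      (integrableOn_Ioo_sub_rpow_neg hq a b t)).integrableOn
    (integrableOn_Ioo_sub_rpow_neg hq a b t).integrableOn

lemma setIntegral_rpowIncrement (hq : q < 1) (hr : 0 < r) (hrt : r ≤ t) :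
    ∫ s in Ioo 0 t, rpowIncrement q r t s =
      (2 * (t - r) ^ (1 - q) - (t ^ (1 - q) - r ^ (1 - q))) / (1 - q) := by
  have before : Iio r ∩ Ioo 0 t = Ioo 0 r := by
    ext s
    simp only [mem_inter_iff, mem_Iio, mem_Ioo]
    grind
  have after : (Iio r)ᶜ ∩ Ioo 0 t = Ico r t := by
    ext s
    simp only [mem_inter_iff, mem_compl_iff, mem_Iio, mem_Ioo, mem_Ico]
    grind
  have int_t := integrableOn_Ioo_sub_rpow_neg hq 0 t t
  have int_diff : IntegrableOn (fun s ↦ (r - s) ^ (-q) - (t - s) ^ (-q)) (Ioo 0 t) :=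
    (integrableOn_Ioo_sub_rpow_neg hq 0 t r).sub int_t
  unfold rpowIncrement
  rw [integral_piecewise measurableSet_Iio int_diff.integrableOn int_t.integrableOn,
    Measure.restrict_restrict measurableSet_Iio,
    Measure.restrict_restrict measurableSet_Iio.compl, before, after, integral_Ico_eq_integral_Ioo,
    integral_sub (integrableOn_Ioo_sub_rpow_neg hq 0 r r) (integrableOn_Ioo_sub_rpow_neg hq 0 r t),
    setIntegral_Ioo_sub_rpow_neg hq hr.le, setIntegral_Ioo_sub_rpow_neg hq hr.le,
    setIntegral_Ioo_sub_rpow_neg hq hrt]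
  simp only [sub_zero, sub_self, zero_rpow (sub_pos.2 hq).ne']
  ring

lemma setIntegral_rpowIncrement_le (hq : q < 1) (hr : 0 < r) (hrt : r ≤ t) :
    ∫ s in Ioo 0 t, rpowIncrement q r t s ≤ 2 / (1 - q) * (t - r) ^ (1 - q) := by
  have : 0 < 1 - q := sub_pos.2 hq
  rw [setIntegral_rpowIncrement hq hr hrt, div_mul_eq_mul_div]
  gcongr
  exact sub_le_self _ (sub_nonneg.2 (by gcongr))

end TimeIntegral

lemma integral_sq_btbmK_time_sub_le {d : ℕ} (hd : d < 4) {r s t : ℝ} (hrt : r ≤ t) (hst : s < t) :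
    ∫ x, (btbmK d (t - s) x - btbmK d (r - s) x) ^ 2 ≤
      btbmEnergy d * rpowIncrement (d / 4) r t s := by
  rw [mul_comm]
  rcases lt_or_ge s r with hsr | hrs
  · rw [rpowIncrement, piecewise_eq_of_mem _ _ _ (mem_Iio.2 hsr)]
    exact integral_sq_btbmK_sub_le hd (sub_pos.2 hsr) (by linarith)
  · rw [rpowIncrement, piecewise_eq_of_notMem _ _ _ (notMem_Iio.2 hrs)]
    have btbmK_past (x) : btbmK d (r - s) x = 0 := if_neg (by linarith)
    simp only [btbmK_past, sub_zero]
    exact (integral_sq_btbmK hd (sub_pos.2 hst)).le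

theorem btbmK_temporal_regularity (d : ℕ) (hd : d ∈ ({1, 2, 3} : Set ℕ)) :
    ∃ C : ℝ, 0 < C ∧ ∀ r t : ℝ, 0 < r → r < t →
      ∫ s in Ioo (0:ℝ) t,
          ∫ x : EuclideanSpace ℝ (Fin d), (btbmK d (t - s) x - btbmK d (r - s) x)^2
        ≤ C * (t - r) ^ ((4 - (d : ℝ))/4) := by
  have hd4 : d < 4 := by
    simp only [mem_insert_iff, mem_singleton_iff] at hd
    lia
  have hq : (d : ℝ) / 4 < 1 := (div_lt_one four_pos).2 (mod_cast hd4)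
  have : 0 < 1 - (d : ℝ) / 4 := sub_pos.2 hq
  have energy_nonneg := btbmEnergy_nonneg d
  refine ⟨(btbmEnergy d + 1) * (2 / (1 - d / 4)), by positivity, fun r t hr hrt ↦ ?_⟩
  have exponent : (4 - (d : ℝ)) / 4 = 1 - d / 4 := by ring
  calc ∫ s in Ioo 0 t, ∫ x, (btbmK d (t - s) x - btbmK d (r - s) x) ^ 2
      ≤ ∫ s in Ioo 0 t, btbmEnergy d * rpowIncrement (d / 4) r t s :=
        integral_mono_of_nonneg (.of_forall fun s ↦ integral_nonneg fun x ↦ sq_nonneg _)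
          ((integrableOn_rpowIncrement hq 0 t).const_mul _)
          (ae_restrict_of_forall_mem measurableSet_Ioo fun s hs ↦
            integral_sq_btbmK_time_sub_le hd4 hrt.le hs.2)
    _ ≤ btbmEnergy d * (2 / (1 - d / 4) * (t - r) ^ (1 - (d : ℝ) / 4)) := by
        rw [integral_const_mul]
        gcongr
        exact setIntegral_rpowIncrement_le hq hr hrt.le
    _ ≤ (btbmEnergy d + 1) * (2 / (1 - d / 4)) * (t - r) ^ ((4 - (d : ℝ)) / 4) := by
        have := sub_nonneg.2 hrt.le
        rw [exponent, mul_assoc]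
        gcongr
        linarith
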